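/- arXiv:2001.00805 — 2 statements merged into one kernel-verified Lean document; each statement's English description precedes it below -/
import Mathlib

section
/- Fix an integer N ≥ 3, a real ε ∈ (0,1), and β ≥ 0. Define posterior mean rewards m_1 = 1, m_2 = 0, and m_i = 1 − ε for 3 ≤ i ≤ N, and the soft Q-learning (Boltzmann) policy π_β(i) = exp(β·m_i)/Σ_{j=1}^N exp(β·m_j). Then π_β(2) ≤ 1/N and π_β(2) ≤ exp(−β(1−ε))/(N−2): the probability that soft Q-learning selects the informative arm 2 is at most 1/N for every β ≥ 0, and decays exponentially in β. -/
open Finset Real Classical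

noncomputable section

/-! If every logit on a set `t` of arms is at least `c`, the partition function is at least
`#t * exp c`. For the informative arm, whose logit is `0`, taking all arms with `c = 0` gives the
uniform bound, and taking the arms `3, …, N` with `c = β * (1 - ε)` gives the exponential decay. -/

/-- The softmax weight `exp (f i) / ∑ j ∈ s, exp (f j)` of `i`, for logits `f` normalized over the
finite set `s`. The Boltzmann policy with inverse temperature `β` and mean rewards `m` is
`softmax s (fun j ↦ β * m j)`. The index `i` is not required to lie in `s`. -/
def softmax {ι : Type*} (s : Finset ι) (f : ι → ℝ) (i : ι) : ℝ :=
  exp (f i) / ∑ j ∈ s, exp (f j)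

section softmax

variable {ι : Type*} {s t : Finset ι} {f : ι → ℝ} {c : ℝ}

lemma card_mul_exp_le_sum_exp (hts : t ⊆ s) (hc : ∀ j ∈ t, c ≤ f j) :
    #t * exp c ≤ ∑ j ∈ s, exp (f j) :=
  calc #t * exp c = #t • exp c := (nsmul_eq_mul _ _).symm
    _ ≤ ∑ j ∈ t, exp (f j) := card_nsmul_le_sum t _ _ fun j hj ↦ exp_le_exp.2 (hc j hj)
    _ ≤ ∑ j ∈ s, exp (f j) := sum_le_sum_of_subset_of_nonneg hts fun _ _ _ ↦ (exp_pos _).le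

lemma softmax_le_exp_sub_div_card (ht : t.Nonempty) (hts : t ⊆ s) (hc : ∀ j ∈ t, c ≤ f j) (i : ι) :
    softmax s f i ≤ exp (f i - c) / #t := by
  have card_pos : (0 : ℝ) < #t := Nat.cast_pos.2 ht.card_pos
  calc softmax s f i ≤ exp (f i) / (#t * exp c) :=
        div_le_div_of_nonneg_left (exp_pos _).le (mul_pos card_pos (exp_pos c))
          (card_mul_exp_le_sum_exp hts hc)
    _ = exp (f i - c) / #t := by rw [exp_sub, div_div, mul_comm]

lemma softmax_le_one_div_card (hs : s.Nonempty) {i : ι} (hi : ∀ j ∈ s, f i ≤ f j) :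
    softmax s f i ≤ 1 / #s := by
  simpa only [sub_self, exp_zero] using softmax_le_exp_sub_div_card hs Subset.rfl hi i

end softmax

/-- Soft Q-learning ('RL as inference') on the 'one unknown action' bandit
(Problem 1): the Boltzmann policy over posterior mean rewards selects the
informative arm 2 with probability at most `1/N` for every `β ≥ 0`, and this
probability decays exponentially in `β` as `exp(−β(1−ε))/(N−2)`. -/
theorem soft_q_one_unknown_action
    (N : ℕ) (hN : 3 ≤ N) (ε : ℝ) (hε : ε ∈ Set.Ioo (0 : ℝ) 1)
    (β : ℝ) (hβ : 0 ≤ β)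
    (m : ℕ → ℝ)
    (hm1 : m 1 = 1) (hm2 : m 2 = 0)
    (hmi : ∀ i, 3 ≤ i → i ≤ N → m i = 1 - ε)
    (piB : ℕ → ℝ)
    (hpi : ∀ i, piB i =
      Real.exp (β * m i) / ∑ j ∈ Finset.Icc 1 N, Real.exp (β * m j)) :
    piB 2 ≤ 1 / N ∧ piB 2 ≤ Real.exp (-(β * (1 - ε))) / (N - 2) := by
  have policy_eq : piB 2 = softmax (Icc 1 N) (fun j ↦ β * m j) 2 := hpi 2
  have mean_nonneg : ∀ j ∈ Icc 1 N, 0 ≤ m j := by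
    intro j hj
    have ⟨one_le, le_N⟩ := mem_Icc.1 hj
    obtain rfl | rfl | three_le : j = 1 ∨ j = 2 ∨ 3 ≤ j := by omega
    · exact hm1 ▸ zero_le_one
    · exact hm2.ge
    · exact hmi j three_le le_N ▸ sub_nonneg.2 hε.2.le
  have informative_logit_le : ∀ j ∈ Icc 1 N, β * m 2 ≤ β * m j := fun j hj ↦
    mul_le_mul_of_nonneg_left (hm2 ▸ mean_nonneg j hj) hβ
  have le_tail_logit : ∀ j ∈ Icc 3 N, β * (1 - ε) ≤ β * m j := fun j hj ↦
    (congrArg (β * ·) (hmi j (mem_Icc.1 hj).1 (mem_Icc.1 hj).2)).ge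
  have arms_nonempty : (Icc 1 N).Nonempty := nonempty_Icc.2 (by omega)
  have card_all : #(Icc 1 N) = N := Nat.card_Icc 1 N
  have card_tail : (#(Icc 3 N) : ℝ) = N - 2 := by
    rw [Nat.card_Icc, Nat.cast_sub (by omega)]
    push_cast; ring
  rw [policy_eq]
  constructor
  · simpa only [card_all] using softmax_le_one_div_card arms_nonempty informative_logit_le
  · simpa only [card_tail, hm2, mul_zero, zero_sub] using
      softmax_le_exp_sub_div_card (nonempty_Icc.2 hN) (Icc_subset_Icc_left (by norm_num))
        le_tail_logit 2
end
end

section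
/- Fix an integer N ≥ 3, a real ε ∈ (0,1), an integer L ≥ 1, and a prior probability p⁺ ∈ (0, 1] with p⁺·L > 3. In the 'one unknown action' bandit of Problem 1, define the Bayesian regret of an algorithm as BayesRegret(alg, L) = p⁺·Regret(M⁺, alg, L) + (1 − p⁺)·Regret(M⁻, alg, L). Then every deterministic algorithm satisfies BayesRegret(alg, L) ≥ 3·(1 − p⁺), and the deterministic algorithm that plays arm 2 in episode 1 and thereafter plays arm 2 if the observed reward was 2 and arm 1 if it was −2 achieves BayesRegret = 3·(1 − p⁺); hence this algorithm is Bayes-optimal among deterministic algorithms whenever p⁺·L > 3. -/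
open Finset Real Classical

noncomputable section

/-- The history produced by running deterministic algorithm `alg` (a map
from histories of (action, reward) pairs to actions) in the deterministic
bandit with reward function `r` for `n` episodes. -/
def run (alg : List (ℕ × ℝ) → ℕ) (r : ℕ → ℝ) : ℕ → List (ℕ × ℝ)
  | 0 => []
  | n + 1 => run alg r n ++ [(alg (run alg r n), r (alg (run alg r n)))]

/-- The regret of `alg` over `L` episodes in the environment with reward
function `r` and optimal per-episode value `V`. -/
def regret (alg : List (ℕ × ℝ) → ℕ) (r : ℕ → ℝ) (V : ℝ) (L : ℕ) : ℝ :=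
  ∑ ℓ ∈ Finset.range L, (V - r (alg (run alg r ℓ)))

/-- Rewards of environment `M⁺` of Problem 1. -/
def rplus (ε : ℝ) : ℕ → ℝ := fun a => if a = 1 then 1 else if a = 2 then 2 else 1 - ε

/-- Rewards of environment `M⁻` of Problem 1. -/
def rminus (ε : ℝ) : ℕ → ℝ := fun a => if a = 1 then 1 else if a = 2 then -2 else 1 - ε

/-- The Bayesian regret of `alg` under the prior putting probability `p⁺`
on `M⁺` and `1 − p⁺` on `M⁻`. -/
def bayesRegret (pPlus ε : ℝ) (alg : List (ℕ × ℝ) → ℕ) (L : ℕ) : ℝ :=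
  pPlus * regret alg (rplus ε) 2 L + (1 - pPlus) * regret alg (rminus ε) 1 L

/-- The algorithm that plays arm 2 in episode 1, and thereafter plays arm 2
in every episode if the first observed reward was 2 and arm 1 if it was −2. -/
def alg2 : List (ℕ × ℝ) → ℕ := fun h =>
  match h.head? with
  | none => 2
  | some (_, r) => if r = 2 then 2 else 1

/-!
Until arm 2 is played, `M⁺` and `M⁻` produce the same history. So an algorithm either plays arm 2
at some point in `M⁻`, which alone costs regret `3` there, or never plays it in `M⁺` either, and
then loses at least `1` in each of the `L` episodes of `M⁺`. Weighted by the prior, the cheaper of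
the two options costs `min (3 (1 - p⁺)) (p⁺ L)`, and `alg2` pays exactly the first amount.
-/

section Bandit

variable {alg : List (ℕ × ℝ) → ℕ} {r r' : ℕ → ℝ} {V Δ : ℝ} {L n : ℕ}

theorem run_congr (h : ∀ k < n, r (alg (run alg r k)) = r' (alg (run alg r k))) :
    run alg r n = run alg r' n := by
  induction n with
  | zero => rfl
  | succ n ih =>
    have run_eq : run alg r n = run alg r' n := ih fun k hk => h k (hk.trans n.lt_succ_self)
    rw [run, run, h n n.lt_succ_self, run_eq]

theorem head?_run_succ (alg : List (ℕ × ℝ) → ℕ) (r : ℕ → ℝ) (n : ℕ) :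
    (run alg r (n + 1)).head? = some (alg [], r (alg [])) := by
  induction n with
  | zero => rfl
  | succ n ih => rw [run, List.head?_append, ih, Option.some_or]

theorem regret_nonneg (hr : ∀ a, r a ≤ V) : 0 ≤ regret alg r V L :=
  Finset.sum_nonneg fun _ _ => sub_nonneg.mpr (hr _)

theorem sub_le_regret (hr : ∀ a, r a ≤ V) (hn : n < L) :
    V - r (alg (run alg r n)) ≤ regret alg r V L :=
  Finset.single_le_sum (f := fun ℓ => V - r (alg (run alg r ℓ)))
    (fun _ _ => sub_nonneg.mpr (hr _)) (Finset.mem_range.mpr hn)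

theorem mul_le_regret (h : ∀ ℓ < L, Δ ≤ V - r (alg (run alg r ℓ))) :
    L * Δ ≤ regret alg r V L := by
  simpa [regret] using Finset.card_nsmul_le_sum (Finset.range L)
    (fun ℓ => V - r (alg (run alg r ℓ))) Δ fun ℓ hℓ => h ℓ (Finset.mem_range.mp hℓ)

end Bandit

section Rewards

variable {ε : ℝ}

theorem rplus_two (ε : ℝ) : rplus ε 2 = 2 := by simp [rplus]

theorem rminus_one (ε : ℝ) : rminus ε 1 = 1 := by simp [rminus]

theorem rminus_two (ε : ℝ) : rminus ε 2 = -2 := by simp [rminus]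

theorem rminus_eq_rplus_of_ne_two (ε : ℝ) {a : ℕ} (ha : a ≠ 2) : rminus ε a = rplus ε a := by
  simp [rplus, rminus, ha]

theorem rplus_le_two (hε : 0 ≤ ε) (a : ℕ) : rplus ε a ≤ 2 := by
  unfold rplus
  split_ifs <;> linarith

theorem rminus_le_one (hε : 0 ≤ ε) (a : ℕ) : rminus ε a ≤ 1 := by
  unfold rminus
  split_ifs <;> linarith

end Rewards

section LowerBound

variable {ε p : ℝ}

theorem three_le_regret_rminus_or_le_regret_rplus (hε : 0 ≤ ε) (alg : List (ℕ × ℝ) → ℕ) (L : ℕ) :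
    3 ≤ regret alg (rminus ε) 1 L ∨ (L : ℝ) ≤ regret alg (rplus ε) 2 L := by
  by_cases probes : ∃ ℓ < L, alg (run alg (rminus ε) ℓ) = 2
  · left
    obtain ⟨ℓ, hℓ, plays_two⟩ := probes
    calc (3 : ℝ) = 1 - rminus ε (alg (run alg (rminus ε) ℓ)) := by
          rw [plays_two, rminus_two]; norm_num
      _ ≤ regret alg (rminus ε) 1 L := sub_le_regret (rminus_le_one hε) hℓ
  · right
    push Not at probes
    have gap : ∀ ℓ < L, 1 ≤ 2 - rplus ε (alg (run alg (rplus ε) ℓ)) := by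
      intro ℓ hℓ
      have same_history : run alg (rminus ε) ℓ = run alg (rplus ε) ℓ :=
        run_congr fun k hk => rminus_eq_rplus_of_ne_two ε (probes k (hk.trans hℓ))
      rw [← same_history, ← rminus_eq_rplus_of_ne_two ε (probes ℓ hℓ)]
      linarith [rminus_le_one hε (alg (run alg (rminus ε) ℓ))]
    simpa only [mul_one] using mul_le_regret gap

theorem min_le_bayesRegret (hε : 0 ≤ ε) (hp : p ∈ Set.Icc (0 : ℝ) 1)
    (alg : List (ℕ × ℝ) → ℕ) (L : ℕ) :
    min (3 * (1 - p)) (p * L) ≤ bayesRegret p ε alg L := by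
  have one_sub_nonneg : 0 ≤ 1 - p := sub_nonneg.mpr hp.2
  have plus_nonneg : 0 ≤ p * regret alg (rplus ε) 2 L :=
    mul_nonneg hp.1 (regret_nonneg (rplus_le_two hε))
  have minus_nonneg : 0 ≤ (1 - p) * regret alg (rminus ε) 1 L :=
    mul_nonneg one_sub_nonneg (regret_nonneg (rminus_le_one hε))
  rcases three_le_regret_rminus_or_le_regret_rplus hε alg L with three_le | L_le
  · calc min (3 * (1 - p)) (p * L) ≤ (1 - p) * 3 := (min_le_left _ _).trans_eq (mul_comm _ _)
      _ ≤ (1 - p) * regret alg (rminus ε) 1 L := mul_le_mul_of_nonneg_left three_le one_sub_nonneg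
      _ ≤ bayesRegret p ε alg L := le_add_of_nonneg_left plus_nonneg
  · calc min (3 * (1 - p)) (p * L) ≤ p * L := min_le_right _ _
      _ ≤ p * regret alg (rplus ε) 2 L := mul_le_mul_of_nonneg_left L_le hp.1
      _ ≤ bayesRegret p ε alg L := le_add_of_nonneg_right minus_nonneg

end LowerBound

theorem alg2_of_head?_eq_some {h : List (ℕ × ℝ)} {a : ℕ} {x : ℝ} (hh : h.head? = some (a, x)) :
    alg2 h = if x = 2 then 2 else 1 := by
  simp only [alg2, hh]

theorem alg2_run_succ (r : ℕ → ℝ) (n : ℕ) :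
    alg2 (run alg2 r (n + 1)) = if r 2 = 2 then 2 else 1 :=
  alg2_of_head?_eq_some (head?_run_succ alg2 r n)

theorem regret_alg2_succ (r : ℕ → ℝ) (V : ℝ) (L : ℕ) :
    regret alg2 r V (L + 1) = L * (V - r (if r 2 = 2 then 2 else 1)) + (V - r 2) := by
  have first_play : alg2 (run alg2 r 0) = 2 := rfl
  simp only [regret, Finset.sum_range_succ', alg2_run_succ, first_play, Finset.sum_const,
    Finset.card_range, nsmul_eq_mul]

theorem regret_alg2_rplus (ε : ℝ) (L : ℕ) : regret alg2 (rplus ε) 2 L = 0 := by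
  cases L with
  | zero => simp [regret]
  | succ n => simp [regret_alg2_succ, rplus_two]

theorem regret_alg2_rminus (ε : ℝ) {L : ℕ} (hL : 1 ≤ L) : regret alg2 (rminus ε) 1 L = 3 := by
  obtain ⟨n, rfl⟩ := Nat.exists_eq_add_of_le' hL
  have two_ne : ¬(-2 : ℝ) = 2 := by norm_num
  rw [regret_alg2_succ, rminus_two, if_neg two_ne, rminus_one]
  ring

theorem bayesRegret_alg2 (p ε : ℝ) {L : ℕ} (hL : 1 ≤ L) :
    bayesRegret p ε alg2 L = 3 * (1 - p) := by
  rw [bayesRegret, regret_alg2_rplus, regret_alg2_rminus ε hL]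
  ring

theorem alg2_bayes_optimal_general {ε p : ℝ} {L : ℕ} (hε : 0 ≤ ε) (hL : 1 ≤ L)
    (hp : p ∈ Set.Icc (0 : ℝ) 1) (hpL : 3 * (1 - p) ≤ p * L) :
    (∀ alg : List (ℕ × ℝ) → ℕ, 3 * (1 - p) ≤ bayesRegret p ε alg L) ∧
      bayesRegret p ε alg2 L = 3 * (1 - p) :=
  ⟨fun alg => (le_min le_rfl hpL).trans (min_le_bayesRegret hε hp alg L), bayesRegret_alg2 p ε hL⟩

/-- In Problem 1 with prior `(p⁺, 1 − p⁺)` and `p⁺ L > 3`, every deterministic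
algorithm taking actions in `{1, …, N}` has Bayesian regret at least
`3 (1 − p⁺)`, and the probing algorithm `alg2` achieves exactly `3 (1 − p⁺)`;
hence `alg2` is Bayes-optimal among deterministic algorithms. -/
theorem alg2_bayes_optimal
    (N : ℕ) (hN : 3 ≤ N) (ε : ℝ) (hε : ε ∈ Set.Ioo (0 : ℝ) 1)
    (L : ℕ) (hL : 1 ≤ L)
    (pPlus : ℝ) (hp : pPlus ∈ Set.Ioc (0 : ℝ) 1) (hpL : 3 < pPlus * L) :
    (∀ alg : List (ℕ × ℝ) → ℕ, (∀ h, 1 ≤ alg h ∧ alg h ≤ N) →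
        3 * (1 - pPlus) ≤ bayesRegret pPlus ε alg L) ∧
      bayesRegret pPlus ε alg2 L = 3 * (1 - pPlus) := by
  have optimal := alg2_bayes_optimal_general hε.1.le hL ⟨hp.1.le, hp.2⟩ (by linarith [hp.1])
  exact ⟨fun alg _ => optimal.1 alg, optimal.2⟩
end
end
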